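/- (Theorem 3.) Let γ = (1/2) sup_{P_0 ∈ 𝒫_0^η, P_1 ∈ 𝒫_1^η} (1 − TV(P_0, P_1)) and γ_ε = (1/2) sup_{P_0 ∈ 𝒫^{η+ε}_{0,N}, P_1 ∈ 𝒫^{η+ε}_{1,N}} (1 − TV(P_0, P_1)), where S_N is an ε-net of X, each ψ_k is 1-Lipschitz, η ∈ [Δ, η_0] and η + ε ≤ η_0 < η_max. Then |γ_ε − γ| ≤ L_0 ε, where L_0 is the Lipschitz constant on [Δ, η_0] of the concave function g(θ) = sup_{P_0 ∈ 𝒫_0^θ, P_1 ∈ 𝒫_1^θ}(1 − TV(P_0, P_1)); in particular γ_ε → γ as ε → 0. -/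

import Mathlib

open MeasureTheory

/-- The total variation distance between two measures:
`TV(P, Q) = sup over measurable sets A of |P(A) − Q(A)|`. -/
noncomputable def tv {Ω : Type*} [MeasurableSpace Ω] (P Q : Measure Ω) : ℝ :=
  ⨆ A : {A : Set Ω // MeasurableSet A}, |(P A.1).toReal - (Q A.1).toReal|

/-- The moment-constrained uncertainty set around nominal `Qhat` with radius `θ`. -/
def momentSet {d : ℕ} (X : Set (EuclideanSpace ℝ (Fin d))) {K : ℕ}
    (ψ : Fin K → X → ℝ) (Qhat : ProbabilityMeasure X) (θ : ℝ) :
    Set (ProbabilityMeasure X) :=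
  {P | ∀ k, |∫ x, ψ k x ∂(P : Measure X) - ∫ x, ψ k x ∂(Qhat : Measure X)| ≤ θ}

/-- The relaxed discretized uncertainty set: members of the moment-constrained set of
radius `θ` supported on the finite set `{z_1,…,z_N}`. -/
def momentSetDiscrete {d : ℕ} (X : Set (EuclideanSpace ℝ (Fin d))) {K : ℕ}
    (ψ : Fin K → X → ℝ) (Qhat : ProbabilityMeasure X) (θ : ℝ)
    {N : ℕ} (z : Fin N → X) : Set (ProbabilityMeasure X) :=
  {P | (P : Measure X) (Set.range z)ᶜ = 0 ∧ P ∈ momentSet X ψ Qhat θ}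

/-- The worst-case affinity `g(θ) = sup_{P₀ ∈ 𝒫₀^θ, P₁ ∈ 𝒫₁^θ} (1 − TV(P₀, P₁))`. -/
noncomputable def worstAffinity {d : ℕ} (X : Set (EuclideanSpace ℝ (Fin d))) {K : ℕ}
    (ψ : Fin K → X → ℝ) (Q0 Q1 : ProbabilityMeasure X) (θ : ℝ) : ℝ :=
  sSup {r : ℝ | ∃ P0 ∈ momentSet X ψ Q0 θ, ∃ P1 ∈ momentSet X ψ Q1 θ,
    r = 1 - tv (P0 : Measure X) (P1 : Measure X)}

/-!
Let `g_s` denote the worst-case affinity when the two measures must live on the net `s`. Sending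
every point to a point of the net within distance `ε` pushes a measure with moment radius `η`
forward to one carried by the net with moment radius `η + ε`, and by data processing this does not
increase the total variation. Hence `g η ≤ g_s (η + ε)`, while `g_s (η + ε) ≤ g (η + ε)` by
inclusion, and the Lipschitz bound on `g` closes the gap.
-/

open scoped NNReal

section TotalVariation

variable {Ω Ω' : Type*} [MeasurableSpace Ω] [MeasurableSpace Ω']

theorem tv_nonneg (P Q : Measure Ω) : 0 ≤ tv P Q :=
  Real.iSup_nonneg fun _ => abs_nonneg _

theorem abs_toReal_sub_toReal_le_tv (P Q : Measure Ω) [IsFiniteMeasure P] [IsFiniteMeasure Q]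
    {A : Set Ω} (hA : MeasurableSet A) : |(P A).toReal - (Q A).toReal| ≤ tv P Q := by
  refine le_ciSup (f := fun A : {A : Set Ω // MeasurableSet A} =>
    |(P A.1).toReal - (Q A.1).toReal|) ⟨max (P.real .univ) (Q.real .univ), ?_⟩ ⟨A, hA⟩
  rintro _ ⟨B, rfl⟩
  exact abs_sub_le_of_nonneg_of_le measureReal_nonneg
    ((measureReal_mono (Set.subset_univ _)).trans (le_max_left _ _)) measureReal_nonneg
    ((measureReal_mono (Set.subset_univ _)).trans (le_max_right _ _))

theorem tv_map_le (P Q : Measure Ω) [IsFiniteMeasure P] [IsFiniteMeasure Q] {T : Ω → Ω'}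
    (hT : Measurable T) : tv (P.map T) (Q.map T) ≤ tv P Q := by
  refine Real.iSup_le (fun A => ?_) (tv_nonneg P Q)
  rw [Measure.map_apply hT A.2, Measure.map_apply hT A.2]
  exact abs_toReal_sub_toReal_le_tv P Q (hT A.2)

end TotalVariation

section Affinity

variable {Ω Ω' : Type*} [MeasurableSpace Ω] [MeasurableSpace Ω']

/-- The worst-case affinity `sup (1 - TV(P₀, P₁))` over `P₀ ∈ S₀` and `P₁ ∈ S₁`; its junk value
is `0` when one of the two sets is empty. -/
noncomputable def supAffinity (S₀ S₁ : Set (ProbabilityMeasure Ω)) : ℝ :=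
  sSup {r : ℝ | ∃ P₀ ∈ S₀, ∃ P₁ ∈ S₁, r = 1 - tv (P₀ : Measure Ω) (P₁ : Measure Ω)}

theorem one_sub_tv_le_supAffinity {S₀ S₁ : Set (ProbabilityMeasure Ω)}
    {P₀ P₁ : ProbabilityMeasure Ω} (h₀ : P₀ ∈ S₀) (h₁ : P₁ ∈ S₁) :
    1 - tv (P₀ : Measure Ω) (P₁ : Measure Ω) ≤ supAffinity S₀ S₁ := by
  refine le_csSup ⟨1, ?_⟩ ⟨P₀, h₀, P₁, h₁, rfl⟩
  rintro _ ⟨R₀, -, R₁, -, rfl⟩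
  exact sub_le_self _ (tv_nonneg _ _)

theorem supAffinity_le {S₀ S₁ : Set (ProbabilityMeasure Ω)} {c : ℝ} (hS₀ : S₀.Nonempty)
    (hS₁ : S₁.Nonempty)
    (h : ∀ P₀ ∈ S₀, ∀ P₁ ∈ S₁, 1 - tv (P₀ : Measure Ω) (P₁ : Measure Ω) ≤ c) :
    supAffinity S₀ S₁ ≤ c := by
  obtain ⟨R₀, h₀⟩ := hS₀
  obtain ⟨R₁, h₁⟩ := hS₁
  refine csSup_le ⟨_, R₀, h₀, R₁, h₁, rfl⟩ ?_
  rintro _ ⟨P₀, hP₀, P₁, hP₁, rfl⟩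
  exact h P₀ hP₀ P₁ hP₁

theorem supAffinity_mono {S₀ S₁ S₀' S₁' : Set (ProbabilityMeasure Ω)} (hS₀ : S₀.Nonempty)
    (hS₁ : S₁.Nonempty) (h₀ : S₀ ⊆ S₀') (h₁ : S₁ ⊆ S₁') :
    supAffinity S₀ S₁ ≤ supAffinity S₀' S₁' :=
  supAffinity_le hS₀ hS₁ fun _ hP₀ _ hP₁ => one_sub_tv_le_supAffinity (h₀ hP₀) (h₁ hP₁)

theorem supAffinity_le_of_map_mem {S₀ S₁ : Set (ProbabilityMeasure Ω)}
    {S₀' S₁' : Set (ProbabilityMeasure Ω')} (hS₀ : S₀.Nonempty) (hS₁ : S₁.Nonempty)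
    {T : Ω → Ω'} (hT : Measurable T) (h₀ : ∀ P ∈ S₀, P.map hT.aemeasurable ∈ S₀')
    (h₁ : ∀ P ∈ S₁, P.map hT.aemeasurable ∈ S₁') :
    supAffinity S₀ S₁ ≤ supAffinity S₀' S₁' :=
  supAffinity_le hS₀ hS₁ fun P₀ hP₀ P₁ hP₁ => by
    have hle := one_sub_tv_le_supAffinity (h₀ P₀ hP₀) (h₁ P₁ hP₁)
    rw [ProbabilityMeasure.toMeasure_map, ProbabilityMeasure.toMeasure_map] at hle
    exact (sub_le_sub_left (tv_map_le _ _ hT) 1).trans hle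

end Affinity

section Lipschitz

variable {α : Type*} [PseudoMetricSpace α] [MeasurableSpace α] [OpensMeasurableSpace α]

theorem exists_measurable_forall_mem_dist_le [Nonempty α] {s : Set α} (hs : s.Countable) {ε : ℝ}
    (hnet : ∀ x, ∃ y ∈ s, dist x y ≤ ε) :
    ∃ T : α → α, Measurable T ∧ (∀ x, T x ∈ s) ∧ ∀ x, dist (T x) x ≤ ε := by
  classical
  obtain ⟨y, hy, -⟩ := hnet (Classical.arbitrary α)
  obtain ⟨e, rfl⟩ := hs.exists_eq_range ⟨y, hy⟩
  have hne : ∀ x, ∃ n, dist x (e n) ≤ ε := fun x => by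
    simpa only [Set.exists_range_iff] using hnet x
  refine ⟨fun x => e (Nat.find (hne x)), ?_, fun x => ⟨_, rfl⟩,
    fun x => (dist_comm _ _).trans_le (Nat.find_spec (hne x))⟩
  exact Measurable.find (fun _ => measurable_const) (fun _ => measurableSet_closedBall) hne

theorem integrable_of_lipschitzWith [BoundedSpace α] {C : ℝ≥0} {f : α → ℝ} (hf : LipschitzWith C f)
    (μ : Measure α) [IsFiniteMeasure μ] : Integrable f μ := by
  obtain ⟨M, hM⟩ := (hf.isBounded_image (Bornology.isBounded_univ.2 ‹_›)).exists_norm_le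
  exact .of_bound hf.continuous.aestronglyMeasurable M
    (.of_forall fun x => hM _ ⟨x, trivial, rfl⟩)

theorem abs_integral_map_sub_integral_le {C : ℝ≥0} {f : α → ℝ} (hf : LipschitzWith C f)
    {μ : Measure α} [IsProbabilityMeasure μ] (hfμ : Integrable f μ) {T : α → α}
    (hT : AEMeasurable T μ) {ε : ℝ} (hTε : ∀ᵐ x ∂μ, dist (T x) x ≤ ε) :
    |∫ x, f x ∂μ.map T - ∫ x, f x ∂μ| ≤ C * ε := by
  have hbound : ∀ᵐ x ∂μ, ‖f (T x) - f x‖ ≤ C * ε :=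
    hTε.mono fun _ hx => hf.dist_le_mul_of_le hx
  have hdiff : Integrable (fun x => f (T x) - f x) μ :=
    .of_bound ((hf.continuous.measurable.comp_aemeasurable hT).aestronglyMeasurable.sub
      hfμ.aestronglyMeasurable) _ hbound
  have hmap : ∫ x, f x ∂μ.map T = ∫ x, (f (T x) - f x) ∂μ + ∫ x, f x ∂μ := by
    rw [integral_map hT hf.continuous.aestronglyMeasurable, ← integral_add hdiff hfμ]
    simp only [sub_add_cancel]
  rw [hmap, add_sub_cancel_right]
  simpa using norm_integral_le_of_norm_le_const hbound

end Lipschitz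

section MomentBall

variable {α ι : Type*} [MeasurableSpace α] {ψ : ι → α → ℝ} {Q P : ProbabilityMeasure α} {η : ℝ}

/-- The set `𝒫^η` of the paper over an arbitrary space and family of moments: probability measures
whose `ψ`-moments are within `η` of those of `Q`. -/
def momentBall (ψ : ι → α → ℝ) (Q : ProbabilityMeasure α) (η : ℝ) : Set (ProbabilityMeasure α) :=
  {P | ∀ k, |∫ x, ψ k x ∂(P : Measure α) - ∫ x, ψ k x ∂(Q : Measure α)| ≤ η}

/-- The set `𝒫_N^η` of the paper, with an arbitrary set `s` in place of the net: members of the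
moment ball carried by `s`. -/
def momentBallOn (s : Set α) (ψ : ι → α → ℝ) (Q : ProbabilityMeasure α) (η : ℝ) :
    Set (ProbabilityMeasure α) :=
  {P | (P : Measure α) sᶜ = 0 ∧ P ∈ momentBall ψ Q η}

theorem self_mem_momentBall (ψ : ι → α → ℝ) (Q : ProbabilityMeasure α) (hη : 0 ≤ η) :
    Q ∈ momentBall ψ Q η := fun k => by
  rwa [sub_self, abs_zero]

theorem momentBallOn_subset (s : Set α) (ψ : ι → α → ℝ) (Q : ProbabilityMeasure α) (η : ℝ) :
    momentBallOn s ψ Q η ⊆ momentBall ψ Q η :=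
  fun _ hP => hP.2

variable [PseudoMetricSpace α] [OpensMeasurableSpace α] {C : ℝ≥0} {T : α → α} {ε : ℝ} {s : Set α}

theorem map_mem_momentBall (hψ : ∀ k, LipschitzWith C (ψ k))
    (hψP : ∀ k, Integrable (ψ k) (P : Measure α)) (hT : AEMeasurable T (P : Measure α))
    (hTε : ∀ᵐ x ∂(P : Measure α), dist (T x) x ≤ ε) (hP : P ∈ momentBall ψ Q η) :
    P.map hT ∈ momentBall ψ Q (η + C * ε) := fun k => by
  rw [add_comm η]
  exact (abs_sub_le _ _ _).trans
    (add_le_add (abs_integral_map_sub_integral_le (hψ k) (hψP k) hT hTε) (hP k))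

theorem map_mem_momentBallOn (hψ : ∀ k, LipschitzWith C (ψ k))
    (hψP : ∀ k, Integrable (ψ k) (P : Measure α)) (hs : MeasurableSet s)
    (hT : AEMeasurable T (P : Measure α)) (hTs : ∀ᵐ x ∂(P : Measure α), T x ∈ s)
    (hTε : ∀ᵐ x ∂(P : Measure α), dist (T x) x ≤ ε) (hP : P ∈ momentBall ψ Q η) :
    P.map hT ∈ momentBallOn s ψ Q (η + C * ε) := by
  refine ⟨?_, map_mem_momentBall hψ hψP hT hTε hP⟩
  rw [ProbabilityMeasure.toMeasure_map]
  exact (ae_map_iff hT hs).2 hTs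

end MomentBall

section Discretization

variable {α ι : Type*} [MetricSpace α] [BoundedSpace α] [MeasurableSpace α]
  [OpensMeasurableSpace α] {C : ℝ≥0} {ψ : ι → α → ℝ} {η ε : ℝ} {s : Set α}

theorem exists_forall_map_mem_momentBallOn [Nonempty α] (hψ : ∀ k, LipschitzWith C (ψ k))
    (hs : s.Countable) (hnet : ∀ x, ∃ y ∈ s, dist x y ≤ ε) :
    ∃ (T : α → α) (hT : Measurable T), ∀ (Q : ProbabilityMeasure α) (η : ℝ),
      ∀ P ∈ momentBall ψ Q η, P.map hT.aemeasurable ∈ momentBallOn s ψ Q (η + C * ε) := by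
  obtain ⟨T, hT, hTs, hTε⟩ := exists_measurable_forall_mem_dist_le hs hnet
  exact ⟨T, hT, fun Q η P => map_mem_momentBallOn hψ (fun k => integrable_of_lipschitzWith (hψ k) P)
    hs.measurableSet hT.aemeasurable (.of_forall hTs) (.of_forall hTε)⟩

theorem momentBallOn_nonempty (hψ : ∀ k, LipschitzWith C (ψ k)) (Q : ProbabilityMeasure α)
    (hη : 0 ≤ η) (hs : s.Countable) (hnet : ∀ x, ∃ y ∈ s, dist x y ≤ ε) :
    (momentBallOn s ψ Q (η + C * ε)).Nonempty := by
  have : Nonempty α := nonempty_of_isProbabilityMeasure (Q : Measure α)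
  obtain ⟨T, hT, hmap⟩ := exists_forall_map_mem_momentBallOn hψ hs hnet
  exact ⟨_, hmap Q η Q (self_mem_momentBall ψ Q hη)⟩

theorem supAffinity_momentBall_le_momentBallOn (hψ : ∀ k, LipschitzWith C (ψ k))
    (Q₀ Q₁ : ProbabilityMeasure α) (hη : 0 ≤ η) (hs : s.Countable)
    (hnet : ∀ x, ∃ y ∈ s, dist x y ≤ ε) :
    supAffinity (momentBall ψ Q₀ η) (momentBall ψ Q₁ η) ≤
      supAffinity (momentBallOn s ψ Q₀ (η + C * ε)) (momentBallOn s ψ Q₁ (η + C * ε)) := by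
  have : Nonempty α := nonempty_of_isProbabilityMeasure (Q₀ : Measure α)
  obtain ⟨T, hT, hmap⟩ := exists_forall_map_mem_momentBallOn hψ hs hnet
  exact supAffinity_le_of_map_mem ⟨Q₀, self_mem_momentBall ψ Q₀ hη⟩
    ⟨Q₁, self_mem_momentBall ψ Q₁ hη⟩ hT (hmap Q₀ η) (hmap Q₁ η)

theorem supAffinity_momentBallOn_le_momentBall (hψ : ∀ k, LipschitzWith C (ψ k))
    (Q₀ Q₁ : ProbabilityMeasure α) (hη : 0 ≤ η) (hs : s.Countable)
    (hnet : ∀ x, ∃ y ∈ s, dist x y ≤ ε) :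
    supAffinity (momentBallOn s ψ Q₀ (η + C * ε)) (momentBallOn s ψ Q₁ (η + C * ε)) ≤
      supAffinity (momentBall ψ Q₀ (η + C * ε)) (momentBall ψ Q₁ (η + C * ε)) :=
  supAffinity_mono (momentBallOn_nonempty hψ Q₀ hη hs hnet)
    (momentBallOn_nonempty hψ Q₁ hη hs hnet) (momentBallOn_subset s ψ Q₀ _)
    (momentBallOn_subset s ψ Q₁ _)

theorem approximation_error_bound_general (hψ : ∀ k, LipschitzWith C (ψ k))
    (Q₀ Q₁ : ProbabilityMeasure α) (hη : 0 ≤ η) (hs : s.Countable)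
    (hnet : ∀ x, ∃ y ∈ s, dist x y ≤ ε) {I : Set ℝ} (hηI : η ∈ I) (hηεI : η + C * ε ∈ I) {L : ℝ}
    (hL : ∀ a ∈ I, ∀ b ∈ I, |supAffinity (momentBall ψ Q₀ a) (momentBall ψ Q₁ a) -
      supAffinity (momentBall ψ Q₀ b) (momentBall ψ Q₁ b)| ≤ L * |a - b|) :
    |(1 / 2) * supAffinity (momentBallOn s ψ Q₀ (η + C * ε)) (momentBallOn s ψ Q₁ (η + C * ε)) -
      (1 / 2) * supAffinity (momentBall ψ Q₀ η) (momentBall ψ Q₁ η)| ≤ L * (C * ε) / 2 := by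
  have hε : 0 ≤ ε := by
    obtain ⟨x⟩ := nonempty_of_isProbabilityMeasure (Q₀ : Measure α)
    obtain ⟨y, -, hxy⟩ := hnet x
    exact dist_nonneg.trans hxy
  have hlower := supAffinity_momentBall_le_momentBallOn hψ Q₀ Q₁ hη hs hnet
  have hupper := supAffinity_momentBallOn_le_momentBall hψ Q₀ Q₁ hη hs hnet
  have hgap := (le_abs_self _).trans (hL _ hηεI _ hηI)
  rw [add_sub_cancel_left, abs_of_nonneg (by positivity)] at hgap
  rw [← mul_sub, abs_of_nonneg (by linarith)]
  linarith

end Discretization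

/-- **Theorem 3.** Let `γ` be half the worst-case affinity at radius `η`
and `γ_ε` half the worst-case affinity of the discretized relaxation at radius `η + ε`
over an `ε`-net; with `1`-Lipschitz moment functions, `η ∈ [Δ, η₀]`, `η + ε ≤ η₀ < η_max`,
and `L₀` a Lipschitz constant of `g` on `[Δ, η₀]`, one has `|γ_ε − γ| ≤ L₀ ε`. -/
theorem approximation_error_bound
    {d : ℕ} (X : Set (EuclideanSpace ℝ (Fin d))) (hX : IsCompact X)
    {K : ℕ} (hK : 0 < K) (ψ : Fin K → X → ℝ) (hψ : ∀ k, Continuous (ψ k))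
    (hLip : ∀ k, ∀ x y : X, |ψ k x - ψ k y| ≤
      ‖(x : EuclideanSpace ℝ (Fin d)) - (y : EuclideanSpace ℝ (Fin d))‖)
    (Q0 Q1 : ProbabilityMeasure X)
    (Δ η0 η ε : ℝ) (hΔ : 0 < Δ) (hΔη0 : Δ < η0)
    (hη : η ∈ Set.Icc Δ η0) (hε : 0 ≤ ε) (hηε : η + ε ≤ η0)
    (hη0max : η0 < ⨆ k : Fin K,
      |∫ x, ψ k x ∂(Q1 : Measure X) - ∫ x, ψ k x ∂(Q0 : Measure X)| / 2)
    {N : ℕ} (z : Fin N → X)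
    (hnet : ∀ x : X, ∃ j, ‖(x : EuclideanSpace ℝ (Fin d)) - (z j : EuclideanSpace ℝ (Fin d))‖ ≤ ε)
    (L0 : ℝ)
    (hL0 : ∀ a ∈ Set.Icc Δ η0, ∀ b ∈ Set.Icc Δ η0,
      |worstAffinity X ψ Q0 Q1 a - worstAffinity X ψ Q0 Q1 b| ≤ L0 * |a - b|) :
    |(1 / 2) * sSup {r : ℝ | ∃ P0 ∈ momentSetDiscrete X ψ Q0 (η + ε) z,
        ∃ P1 ∈ momentSetDiscrete X ψ Q1 (η + ε) z,
        r = 1 - tv (P0 : Measure X) (P1 : Measure X)} -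
      (1 / 2) * worstAffinity X ψ Q0 Q1 η| ≤ L0 * ε := by
  have : CompactSpace X := isCompact_iff_compactSpace.mp hX
  have hψ₁ (k : Fin K) : LipschitzWith 1 (ψ k) := .mk_one fun x y => by
    simpa only [Subtype.dist_eq, dist_eq_norm, Real.norm_eq_abs] using hLip k x y
  have hnet' (x : X) : ∃ y ∈ Set.range z, dist x y ≤ ε := by
    simpa only [Set.exists_range_iff, Subtype.dist_eq, dist_eq_norm] using hnet x
  have hηε_mem : η + (1 : ℝ≥0) * ε ∈ Set.Icc Δ η0 := by
    rw [NNReal.coe_one, one_mul]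
    exact ⟨hη.1.trans (le_add_of_nonneg_right hε), hηε⟩
  have hbound := approximation_error_bound_general hψ₁ Q0 Q1 (hΔ.le.trans hη.1)
    (Set.finite_range z).countable hnet' hη hηε_mem hL0
  rw [NNReal.coe_one, one_mul] at hbound
  exact hbound.trans (half_le_self (by linarith [(abs_nonneg _).trans hbound]))
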